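/- Let λ ∈ [−1, 1], let A, B be bounded self-adjoint operators on H with the spectrum of A contained in (−1, 1), set X := A + iB and C_λ := λ(I − λA)^{-1/2} B (I − λA)^{-1/2}. Then I − λX is invertible, (I − λX)^{-1} = (I − λA)^{-1/2} (I + C_λ²)^{-1} (I + iC_λ) (I − λA)^{-1/2}, and consequently Re{(I − λX)^{-1}} = (I − λA)^{-1/2} (I + C_λ²)^{-1} (I − λA)^{-1/2} and Im{(I − λX)^{-1}} = (I − λA)^{-1/2} (I + C_λ²)^{-1} C_λ (I − λA)^{-1/2}. -/

import Mathlib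

open ContinuousLinearMap MeasureTheory

variable {H : Type*} [NormedAddCommGroup H] [InnerProductSpace ℂ H] [CompleteSpace H]

/-- The real part `(Y + Y*)/2` of a bounded operator. -/
noncomputable def opRe (Y : H →L[ℂ] H) : H →L[ℂ] H := (2 : ℂ)⁻¹ • (Y + star Y)

/-- The imaginary part `(Y - Y*)/(2i)` of a bounded operator. -/
noncomputable def opIm (Y : H →L[ℂ] H) : H →L[ℂ] H := (2 * Complex.I)⁻¹ • (Y - star Y)

/-- The inverse square root `T^{-1/2}` of a (positive invertible) operator, via the
continuous functional calculus. -/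
noncomputable def invSqrt (T : H →L[ℂ] H) : H →L[ℂ] H := cfc (fun x : ℝ => (Real.sqrt x)⁻¹) T

/-!
Write `t = I - λA` and `s = t^{-1/2}`. Conjugating by `s` turns `I - λX = t - iλB` into
`s (I - λX) s = I - iC_λ`, and since `C_λ` is self-adjoint,
`(I + iC_λ)(I - iC_λ) = I + C_λ²` is invertible. Undoing the conjugation gives
`(I - λX)⁻¹ = s (I + C_λ²)⁻¹ s + i s (I + C_λ²)⁻¹ C_λ s`, in which the coefficients of `1` and `i`
are self-adjoint, hence they are the real and the imaginary part.
-/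

open Complex ComplexStarModule
open scoped Ring

theorem isUnit_of_mul_mul_self_eq_one {M : Type*} [Monoid M] {s t : M} (h : s * t * s = 1) :
    IsUnit s :=
  isUnit_iff_exists_and_exists.mpr ⟨⟨t * s, by rwa [← mul_assoc]⟩, ⟨s * t, h⟩⟩

section MonoidWithZero

variable {M : Type*} [MonoidWithZero M]

theorem ringInverse_eq_mul_ringInverse_mul_mul {u v : M} (hu : IsUnit u) (hv : IsUnit v) (x : M) :
    x⁻¹ʳ = v * (u * x * v)⁻¹ʳ * u := by
  rw [Ring.inverse_mul (.inr hv), Ring.inverse_mul (.inl hu), Ring.mul_inverse_cancel_left _ _ hv,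
    Ring.inverse_mul_cancel_right _ _ hu]

theorem commute_ringInverse_left {x y : M} (h : Commute x y) : Commute x⁻¹ʳ y := by
  by_cases hx : IsUnit x
  · obtain ⟨u, rfl⟩ := hx
    rw [Ring.inverse_unit]
    exact h.units_inv_left
  · rw [Ring.inverse_non_unit _ hx]
    exact .zero_left y

end MonoidWithZero

section Algebra

variable {R : Type*} [Ring R] [Algebra ℂ R]

theorem one_add_I_smul_mul_one_sub_I_smul (c : R) : (1 + I • c) * (1 - I • c) = 1 + c ^ 2 := by
  have hI : (I • c) ^ 2 = -c ^ 2 := by rw [smul_pow, I_sq, neg_one_smul]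
  rw [← (Commute.one_left (I • c)).sq_sub_sq, hI, one_pow, sub_neg_eq_add]

theorem commute_one_add_I_smul_one_sub_I_smul (c : R) : Commute (1 + I • c) (1 - I • c) :=
  (Commute.one_left _).add_left ((Commute.one_right _).sub_right (.refl _))

theorem isUnit_one_sub_I_smul {c : R} (hc : IsUnit (1 + c ^ 2)) : IsUnit (1 - I • c) := by
  rw [← one_add_I_smul_mul_one_sub_I_smul,
    (commute_one_add_I_smul_one_sub_I_smul c).isUnit_mul_iff] at hc
  exact hc.2

theorem ringInverse_one_sub_I_smul {c : R} (hc : IsUnit (1 + c ^ 2)) :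
    (1 - I • c)⁻¹ʳ = (1 + c ^ 2)⁻¹ʳ * (1 + I • c) := by
  have hcomm := commute_one_add_I_smul_one_sub_I_smul c
  rw [← one_add_I_smul_mul_one_sub_I_smul] at hc ⊢
  rw [Ring.mul_inverse_rev' hcomm,
    Ring.inverse_mul_cancel_right _ _ (hcomm.isUnit_mul_iff.mp hc).1]

theorem mul_sub_I_smul_mul_eq {s t : R} (hst : s * t * s = 1) (b : R) :
    s * (t - I • b) * s = 1 - I • (s * b * s) := by
  rw [mul_sub, sub_mul, hst, mul_smul_comm, smul_mul_assoc]

theorem isUnit_sub_I_smul {s t b : R} (hst : s * t * s = 1)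
    (hb : IsUnit (1 + (s * b * s) ^ 2)) : IsUnit (t - I • b) := by
  have hs := isUnit_of_mul_mul_self_eq_one hst
  rw [← hs.mul_left_iff, ← hs.mul_right_iff, mul_sub_I_smul_mul_eq hst]
  exact isUnit_one_sub_I_smul hb

theorem ringInverse_sub_I_smul {s t b : R} (hst : s * t * s = 1)
    (hb : IsUnit (1 + (s * b * s) ^ 2)) :
    (t - I • b)⁻¹ʳ = s * (1 + (s * b * s) ^ 2)⁻¹ʳ * (1 + I • (s * b * s)) * s := by
  have hs := isUnit_of_mul_mul_self_eq_one hst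
  rw [ringInverse_eq_mul_ringInverse_mul_mul hs hs, mul_sub_I_smul_mul_eq hst,
    ringInverse_one_sub_I_smul hb, ← mul_assoc]

theorem mul_mul_one_add_I_smul_mul_eq (s d c : R) :
    s * d * (1 + I • c) * s = s * d * s + I • (s * d * c * s) := by
  rw [mul_add, add_mul, mul_one, mul_smul_comm, smul_mul_assoc]

end Algebra

section StarModule

variable {E : Type*} [AddCommGroup E] [Module ℂ E] [StarAddMonoid E] [StarModule ℂ E] {p q : E}

theorem realPart_add_I_smul (hp : IsSelfAdjoint p) (hq : IsSelfAdjoint q) :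
    (ℜ (p + I • q) : E) = p := by
  rw [map_add, realPart_I_smul, hq.imaginaryPart, neg_zero, add_zero, hp.coe_realPart]

theorem imaginaryPart_add_I_smul (hp : IsSelfAdjoint p) (hq : IsSelfAdjoint q) :
    (ℑ (p + I • q) : E) = q := by
  rw [map_add, imaginaryPart_I_smul, hp.imaginaryPart, zero_add, hq.coe_realPart]

end StarModule

theorem isSelfAdjoint_mul_mul_mul {R : Type*} [Semigroup R] [StarMul R] {s d c : R}
    (hs : IsSelfAdjoint s) (hd : IsSelfAdjoint d) (hc : IsSelfAdjoint c) (hdc : Commute d c) :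
    IsSelfAdjoint (s * d * c * s) := by
  rw [mul_assoc s d c]
  exact ((hd.commute_iff hc).mp hdc).conjugate_self hs

section StarAlgebra

variable {R : Type*} [Ring R] [StarRing R] [Algebra ℂ R] [StarModule ℂ R] {s d c : R}

theorem realPart_mul_mul_one_add_I_smul_mul (hs : IsSelfAdjoint s) (hd : IsSelfAdjoint d)
    (hc : IsSelfAdjoint c) (hdc : Commute d c) :
    (ℜ (s * d * (1 + I • c) * s) : R) = s * d * s := by
  rw [mul_mul_one_add_I_smul_mul_eq, realPart_add_I_smul (hd.conjugate_self hs)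
    (isSelfAdjoint_mul_mul_mul hs hd hc hdc)]

theorem imaginaryPart_mul_mul_one_add_I_smul_mul (hs : IsSelfAdjoint s) (hd : IsSelfAdjoint d)
    (hc : IsSelfAdjoint c) (hdc : Commute d c) :
    (ℑ (s * d * (1 + I • c) * s) : R) = s * d * c * s := by
  rw [mul_mul_one_add_I_smul_mul_eq, imaginaryPart_add_I_smul (hd.conjugate_self hs)
    (isSelfAdjoint_mul_mul_mul hs hd hc hdc)]

end StarAlgebra

theorem spectrum_real_subset_of_spectrum_complex_subset {R : Type*} [Ring R] [Algebra ℂ R]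
    {a : R} {s : Set ℝ} (h : spectrum ℂ a ⊆ (fun x : ℝ => (x : ℂ)) '' s) : spectrum ℝ a ⊆ s := by
  rw [← Set.preimage_image_eq s ofReal_injective, ← spectrum.preimage_algebraMap ℂ]
  exact Set.preimage_mono h

section CStarAlgebra

variable {R : Type*} [CStarAlgebra R] [PartialOrder R] [StarOrderedRing R] {a c : R}

theorem isStrictlyPositive_one_add_sq (hc : IsSelfAdjoint c) : IsStrictlyPositive (1 + c ^ 2) :=
  isStrictlyPositive_one.add_nonneg hc.sq_nonneg

theorem isStrictlyPositive_one_sub_smul {l : ℝ} (hl : l ∈ Set.Icc (-1) 1) (ha : IsSelfAdjoint a)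
    (hspec : spectrum ℝ a ⊆ Set.Ioo (-1) 1) : IsStrictlyPositive (1 - (l : ℂ) • a) := by
  have eq_cfc : 1 - (l : ℂ) • a = cfc (fun x : ℝ => 1 - l * x) a := by
    rw [cfc_sub .., cfc_const_one .., cfc_const_mul_id .., Complex.coe_smul]
  rw [eq_cfc, cfc_isStrictlyPositive_iff ..]
  intro x hx
  have abs_lt_one : |l * x| < 1 := by
    rw [abs_mul]
    exact mul_lt_one_of_nonneg_of_lt_one_right (abs_le.mpr hl) (abs_nonneg x)
      (abs_lt.mpr (hspec hx))
  exact sub_pos.mpr (abs_lt.mp abs_lt_one).2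

theorem cfc_inv_sqrt_eq_rpow (ha : IsStrictlyPositive a) :
    cfc (fun x : ℝ => (√x)⁻¹) a = a ^ (-(1 / 2) : ℝ) := by
  rw [CFC.rpow_eq_cfc_real ha.nonneg]
  refine cfc_congr fun x hx => ?_
  rw [Real.rpow_neg (ha.spectrum_pos hx).le, Real.sqrt_eq_rpow]

theorem stmt4_general (l : ℝ) (a b x s c : R) (ha : IsStrictlyPositive (1 - (l : ℂ) • a))
    (hb : IsSelfAdjoint b) (hx : x = a + I • b) (hs : s = (1 - (l : ℂ) • a) ^ (-(1 / 2) : ℝ))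
    (hc : c = l • (s * b * s)) :
    IsUnit (1 - (l : ℂ) • x) ∧
    (1 - (l : ℂ) • x)⁻¹ʳ = s * (1 + c ^ 2)⁻¹ʳ * (1 + I • c) * s ∧
    (ℜ (1 - (l : ℂ) • x)⁻¹ʳ : R) = s * (1 + c ^ 2)⁻¹ʳ * s ∧
    (ℑ (1 - (l : ℂ) • x)⁻¹ʳ : R) = s * (1 + c ^ 2)⁻¹ʳ * c * s := by
  have s_selfAdjoint : IsSelfAdjoint s := hs ▸ CFC.rpow_nonneg.isSelfAdjoint
  have conj_eq_one : s * (1 - (l : ℂ) • a) * s = 1 := hs ▸ CFC.conjugate_rpow_neg_one_half _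
  have c_selfAdjoint : IsSelfAdjoint c :=
    hc ▸ (IsSelfAdjoint.all l).smul (hb.conjugate_self s_selfAdjoint)
  have conj_eq_c : s * ((l : ℂ) • b) * s = c := by
    rw [hc, mul_smul_comm, smul_mul_assoc, Complex.coe_smul]
  have one_sub_eq : 1 - (l : ℂ) • x = (1 - (l : ℂ) • a) - I • (l : ℂ) • b := by
    rw [hx, smul_add, smul_comm, sub_add_eq_sub_sub]
  have denom_pos := isStrictlyPositive_one_add_sq c_selfAdjoint
  have inverse_selfAdjoint : IsSelfAdjoint (1 + c ^ 2)⁻¹ʳ := denom_pos.isSelfAdjoint.ringInverse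
  have inverse_commute : Commute (1 + c ^ 2)⁻¹ʳ c :=
    commute_ringInverse_left ((Commute.one_left c).add_left (.pow_self c 2))
  have inverse_eq := ringInverse_sub_I_smul conj_eq_one (conj_eq_c.symm ▸ denom_pos.isUnit)
  rw [conj_eq_c] at inverse_eq
  rw [one_sub_eq, inverse_eq]
  exact ⟨isUnit_sub_I_smul conj_eq_one (conj_eq_c.symm ▸ denom_pos.isUnit), rfl,
    realPart_mul_mul_one_add_I_smul_mul s_selfAdjoint inverse_selfAdjoint c_selfAdjoint
      inverse_commute,
    imaginaryPart_mul_mul_one_add_I_smul_mul s_selfAdjoint inverse_selfAdjoint c_selfAdjoint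
      inverse_commute⟩

end CStarAlgebra

theorem opRe_eq_realPart (Y : H →L[ℂ] H) : opRe Y = ℜ Y := by
  rw [opRe, realPart_apply_coe, ← Complex.coe_smul, ofReal_inv, ofReal_ofNat]

theorem opIm_eq_imaginaryPart (Y : H →L[ℂ] H) : opIm Y = ℑ Y := by
  rw [opIm, imaginaryPart_apply_coe, ← Complex.coe_smul, smul_smul]
  simp

/-- For `λ ∈ [−1,1]`, self-adjoint `A, B` with `σ(A) ⊆ (−1,1)`, `X = A + iB` and
`C_λ = λ(I−λA)^{-1/2} B (I−λA)^{-1/2}`: the operator `I − λX` is invertible,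
`(I−λX)⁻¹ = (I−λA)^{-1/2}(I+C_λ²)⁻¹(I+iC_λ)(I−λA)^{-1/2}`, and consequently
`Re (I−λX)⁻¹ = (I−λA)^{-1/2}(I+C_λ²)⁻¹(I−λA)^{-1/2}` and
`Im (I−λX)⁻¹ = (I−λA)^{-1/2}(I+C_λ²)⁻¹ C_λ (I−λA)^{-1/2}`. -/
theorem stmt4 [TopologicalSpace.SeparableSpace H] (hinf : ¬ FiniteDimensional ℂ H)
    (l : ℝ) (hl : l ∈ Set.Icc (-1 : ℝ) 1)
    (A B X S C : H →L[ℂ] H) (hA : IsSelfAdjoint A) (hB : IsSelfAdjoint B)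
    (hspA : spectrum ℂ A ⊆ (fun x : ℝ => (x : ℂ)) '' Set.Ioo (-1 : ℝ) 1)
    (hX : X = A + Complex.I • B)
    (hS : S = invSqrt (1 - (l : ℂ) • A)) (hC : C = l • (S * B * S)) :
    IsUnit (1 - (l : ℂ) • X) ∧
    Ring.inverse (1 - (l : ℂ) • X) =
      S * Ring.inverse (1 + C ^ 2) * (1 + Complex.I • C) * S ∧
    opRe (Ring.inverse (1 - (l : ℂ) • X)) = S * Ring.inverse (1 + C ^ 2) * S ∧
    opIm (Ring.inverse (1 - (l : ℂ) • X)) = S * Ring.inverse (1 + C ^ 2) * C * S := by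
  have hT := isStrictlyPositive_one_sub_smul hl hA
    (spectrum_real_subset_of_spectrum_complex_subset hspA)
  rw [opRe_eq_realPart, opIm_eq_imaginaryPart]
  exact stmt4_general l A B X S C hT hB hX (hS.trans (cfc_inv_sqrt_eq_rpow hT)) hC
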